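/- arXiv:1009.4502 — 2 statements merged into one kernel-verified Lean document; each statement's English description precedes it below -/
import Mathlib

section
/- Let f : ℝ³ → ℝ be continuous, nonnegative and rapidly decaying (i.e. sup_v (1+|v|)^k f(v) < ∞ for every k ∈ ℕ). Then for every collision invariant ψ(v) = a + b·v + c|v|² (a, c ∈ ℝ, b ∈ ℝ³), the collision integral satisfies ∫_{ℝ³} C(f)(v) ψ(v) dv = 0. In particular ∫ C(f) dv = 0, ∫ C(f) v_k dv = 0 for k = 1,2,3, and ∫ C(f) |v|² dv = 0 (conservation of mass, momentum and energy by collisions). -/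
/-!
Write `G(v, v*, ω) = f(v) f(v*) |(v - v*)·ω|`. For each unit vector `ω` the collision
`T : (v, v*) ↦ (v', v*')` is a linear involution of `ℝ³ × ℝ³`, so its determinant is `±1` and it
preserves Lebesgue measure. It reverses `(v - v*)·ω`, hence the integrand of `C(f)` is `G ∘ T - G`,
and

  `∫ C(f) ψ = ∫ (G ∘ T - G) ψ(v) = ∫ G (ψ(v') - ψ(v))`.

Exchanging the particles fixes `G` and turns `v'` into `v*'`; averaging over the exchange gives the
weak form `∫ C(f) ψ = ½ ∫ G (ψ(v') + ψ(v*') - ψ(v) - ψ(v*))`, which vanishes when `ψ` is a collision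
invariant. Since `G` grows by one power of the velocities, `k + 1` moments of `f` make all these
integrals converge for `ψ` of growth `k`.
-/

open MeasureTheory
open scoped RealInnerProductSpace

noncomputable section

/-- The post-collision velocity `v' = v − ((v−v*)·ω)ω`. -/
def vPost (v vs ω : EuclideanSpace ℝ (Fin 3)) : EuclideanSpace ℝ (Fin 3) :=
  v - ⟪v - vs, ω⟫ • ω

/-- The post-collision velocity `v*' = v* + ((v−v*)·ω)ω`. -/
def vsPost (v vs ω : EuclideanSpace ℝ (Fin 3)) : EuclideanSpace ℝ (Fin 3) :=
  vs + ⟪v - vs, ω⟫ • ω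

/-- The surface measure on the unit sphere `S² ⊂ ℝ³`. -/
def sphereMeasure : Measure (Metric.sphere (0 : EuclideanSpace ℝ (Fin 3)) 1) :=
  (volume : Measure (EuclideanSpace ℝ (Fin 3))).toSphere

/-- The (dimensionless, hard-sphere) Boltzmann collision integral
`C(f)(v) = ∫_{ℝ³}∫_{S²} (f(v')f(v*') − f(v)f(v*)) |(v−v*)·ω| dω dv*`. -/
def collisionIntegral (f : EuclideanSpace ℝ (Fin 3) → ℝ)
    (v : EuclideanSpace ℝ (Fin 3)) : ℝ :=
  ∫ vs, (∫ ω : Metric.sphere (0 : EuclideanSpace ℝ (Fin 3)) 1,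
    (f (vPost v vs ω) * f (vsPost v vs ω) - f v * f vs) *
      |⟪v - vs, (ω : EuclideanSpace ℝ (Fin 3))⟫| ∂sphereMeasure)

/-- A function on `ℝ³` is rapidly decaying if `sup_v (1+|v|)^k f(v) < ∞` for every `k ∈ ℕ`. -/
def RapidlyDecaying (f : EuclideanSpace ℝ (Fin 3) → ℝ) : Prop :=
  ∀ k : ℕ, ∃ C : ℝ, ∀ v, (1 + ‖v‖) ^ k * f v ≤ C

/-- `ln f` has polynomial growth: `|ln f(v)| ≤ C(1+|v|)^m` for some constants `C, m`. -/
def LogPolyGrowth (f : EuclideanSpace ℝ (Fin 3) → ℝ) : Prop :=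
  ∃ (C : ℝ) (m : ℕ), ∀ v, |Real.log (f v)| ≤ C * (1 + ‖v‖) ^ m

local notation "ℝ³" => EuclideanSpace ℝ (Fin 3)
local notation "S²" => Metric.sphere (0 : EuclideanSpace ℝ (Fin 3)) 1

section Involution

lemma measurePreserving_of_involutive_linearMap {E : Type*} [NormedAddCommGroup E]
    [NormedSpace ℝ E] [FiniteDimensional ℝ E] [MeasurableSpace E] [BorelSpace E]
    (μ : Measure E) [μ.IsAddHaarMeasure] {L : E →ₗ[ℝ] E} (hL : Function.Involutive L) :
    MeasurePreserving L μ μ := by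
  have hdet : L.det * L.det = 1 := by
    rw [← map_mul, show L * L = 1 from LinearMap.ext hL, map_one]
  have habs : |L.det⁻¹| = 1 := by
    rcases mul_self_eq_one_iff.mp hdet with h | h <;> simp [h]
  refine ⟨L.continuous_of_finiteDimensional.measurable, ?_⟩
  rw [Measure.map_linearMap_addHaar_eq_smul_addHaar μ (left_ne_zero_of_mul_eq_one hdet), habs,
    ENNReal.ofReal_one, one_smul]

variable {X : Type*} [MeasurableSpace X] {μ : Measure X} {T : X → X}

lemma integral_comp_of_involutive (hT : MeasurePreserving T μ μ) (hinv : Function.Involutive T)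
    {F : Type*} [NormedAddCommGroup F] [NormedSpace ℝ F] (g : X → F) :
    ∫ x, g (T x) ∂μ = ∫ x, g x ∂μ :=
  hT.integral_comp (MeasurableEquiv.ofInvolutive T hinv hT.measurable).measurableEmbedding g

lemma integral_eq_half_integral_add_comp (hT : MeasurePreserving T μ μ)
    (hinv : Function.Involutive T) {g : X → ℝ} (hg : Integrable g μ) :
    ∫ x, g x ∂μ = 1 / 2 * ∫ x, (g x + g (T x)) ∂μ := by
  have hgT : Integrable (fun x => g (T x)) μ := hT.integrable_comp_of_integrable hg
  rw [integral_add hg hgT, integral_comp_of_involutive hT hinv]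
  ring

variable {G φ : X → ℝ}

lemma integrable_comp_mul_of_involutive (hT : MeasurePreserving T μ μ)
    (hinv : Function.Involutive T) (h : Integrable (fun x => G x * φ (T x)) μ) :
    Integrable (fun x => G (T x) * φ x) μ := by
  simpa only [Function.comp_def, hinv _] using hT.integrable_comp_of_integrable h

lemma integral_comp_sub_mul_of_involutive (hT : MeasurePreserving T μ μ)
    (hinv : Function.Involutive T) (h : Integrable (fun x => G x * φ x) μ)
    (hφT : Integrable (fun x => G x * φ (T x)) μ) :
    ∫ x, (G (T x) - G x) * φ x ∂μ = ∫ x, G x * (φ (T x) - φ x) ∂μ := by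
  have hmove : ∫ x, G (T x) * φ x ∂μ = ∫ x, G x * φ (T x) ∂μ := by
    simpa only [hinv _] using integral_comp_of_involutive hT hinv fun x => G x * φ (T x)
  simp only [sub_mul, mul_sub]
  rw [integral_sub (integrable_comp_mul_of_involutive hT hinv hφT) h, hmove, integral_sub hφT h]

end Involution

section InnerProductSpace

variable {E : Type*} [NormedAddCommGroup E] [InnerProductSpace ℝ E]

lemma abs_inner_sub_le_one_add_norm_mul (v vs : E) {ω : E} (hω : ‖ω‖ = 1) :
    |⟪v - vs, ω⟫| ≤ (1 + ‖v‖) * (1 + ‖vs‖) := by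
  have hprod : 0 ≤ ‖v‖ * ‖vs‖ := by positivity
  calc |⟪v - vs, ω⟫| ≤ ‖v - vs‖ * ‖ω‖ := abs_real_inner_le_norm _ _
    _ ≤ ‖v‖ + ‖vs‖ := by rw [hω, mul_one]; exact norm_sub_le _ _
    _ ≤ (1 + ‖v‖) * (1 + ‖vs‖) := by linarith

lemma abs_quadratic_le (a c : ℝ) (b v : E) :
    |a + ⟪b, v⟫ + c * ‖v‖ ^ 2| ≤ (|a| + ‖b‖ + |c|) * (1 + ‖v‖) ^ 2 := by
  have hv := norm_nonneg v
  calc |a + ⟪b, v⟫ + c * ‖v‖ ^ 2| ≤ |a| + |⟪b, v⟫| + |c * ‖v‖ ^ 2| := abs_add_three _ _ _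
    _ ≤ |a| * 1 + ‖b‖ * ‖v‖ + |c| * ‖v‖ ^ 2 := by
      rw [abs_mul c, abs_of_nonneg (sq_nonneg ‖v‖), mul_one]
      gcongr
      exact abs_real_inner_le_norm b v
    _ ≤ |a| * (1 + ‖v‖) ^ 2 + ‖b‖ * (1 + ‖v‖) ^ 2 + |c| * (1 + ‖v‖) ^ 2 := by
      gcongr <;> nlinarith
    _ = (|a| + ‖b‖ + |c|) * (1 + ‖v‖) ^ 2 := by ring

end InnerProductSpace

section Collision

variable (v vs : ℝ³) {ω : ℝ³}

lemma inner_vPost_sub_vsPost (hω : ‖ω‖ = 1) :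
    ⟪vPost v vs ω - vsPost v vs ω, ω⟫ = -⟪v - vs, ω⟫ := by
  have hrel : vPost v vs ω - vsPost v vs ω = (v - vs) - (2 * ⟪v - vs, ω⟫) • ω := by
    simp only [vPost, vsPost]; module
  rw [hrel, inner_sub_left, real_inner_smul_left, real_inner_self_eq_norm_sq, hω]
  ring

lemma vPost_vPost_vsPost (hω : ‖ω‖ = 1) : vPost (vPost v vs ω) (vsPost v vs ω) ω = v := by
  rw [vPost, inner_vPost_sub_vsPost v vs hω, vPost]; module

lemma vsPost_vPost_vsPost (hω : ‖ω‖ = 1) : vsPost (vPost v vs ω) (vsPost v vs ω) ω = vs := by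
  rw [vsPost, inner_vPost_sub_vsPost v vs hω, vsPost]; module

lemma vPost_swap (ω : ℝ³) : vPost vs v ω = vsPost v vs ω := by
  rw [vPost, vsPost, ← neg_sub v vs, inner_neg_left]; module

lemma vPost_add_vsPost (ω : ℝ³) : vPost v vs ω + vsPost v vs ω = v + vs := by
  simp only [vPost, vsPost]; module

lemma norm_sq_vPost_add_norm_sq_vsPost (hω : ‖ω‖ = 1) :
    ‖vPost v vs ω‖ ^ 2 + ‖vsPost v vs ω‖ ^ 2 = ‖v‖ ^ 2 + ‖vs‖ ^ 2 := by
  simp only [vPost, vsPost, norm_sub_sq_real, norm_add_sq_real, real_inner_smul_right, norm_smul,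
    hω, inner_sub_left, mul_one, Real.norm_eq_abs, sq_abs]
  ring

lemma one_add_norm_vPost_le (hω : ‖ω‖ = 1) :
    1 + ‖vPost v vs ω‖ ≤ (1 + ‖v‖) * (1 + ‖vs‖) := by
  have hprod : 0 ≤ ‖v‖ * ‖vs‖ := by positivity
  have hle : ‖vPost v vs ω‖ ≤ ‖v‖ + ‖vs‖ := by
    refine le_of_sq_le_sq ?_ (by positivity)
    nlinarith [norm_sq_vPost_add_norm_sq_vsPost v vs hω, sq_nonneg ‖vsPost v vs ω‖]
  linarith

/-- For fixed `ω`, the collision `(v, v*) ↦ (v', v*')` as a linear map of `ℝ³ × ℝ³`. -/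
def collisionLinearMap (ω : ℝ³) : ℝ³ × ℝ³ →ₗ[ℝ] ℝ³ × ℝ³ where
  toFun p := (vPost p.1 p.2 ω, vsPost p.1 p.2 ω)
  map_add' p q := by
    ext1 <;> simp only [vPost, vsPost, Prod.fst_add, Prod.snd_add, inner_sub_left,
      inner_add_left] <;> module
  map_smul' r p := by
    ext1 <;> simp only [vPost, vsPost, Prod.smul_fst, Prod.smul_snd, inner_sub_left,
      real_inner_smul_left, RingHom.id_apply] <;> module

lemma involutive_collisionLinearMap (hω : ‖ω‖ = 1) :
    Function.Involutive (collisionLinearMap ω) := fun p =>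
  Prod.ext (vPost_vPost_vsPost p.1 p.2 hω) (vsPost_vPost_vsPost p.1 p.2 hω)

/-- A collision invariant: a quantity whose sum over the two particles is unchanged by every
collision. -/
def IsCollisionInvariant (ψ : ℝ³ → ℝ) : Prop :=
  ∀ v vs ω : ℝ³, ‖ω‖ = 1 → ψ (vPost v vs ω) + ψ (vsPost v vs ω) = ψ v + ψ vs

lemma isCollisionInvariant_quadratic (a c : ℝ) (b : ℝ³) :
    IsCollisionInvariant fun v => a + ⟪b, v⟫ + c * ‖v‖ ^ 2 := by
  intro v vs ω hω
  have hmomentum : ⟪b, vPost v vs ω⟫ + ⟪b, vsPost v vs ω⟫ = ⟪b, v⟫ + ⟪b, vs⟫ := by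
    rw [← inner_add_right, vPost_add_vsPost, inner_add_right]
  linear_combination hmomentum + c * norm_sq_vPost_add_norm_sq_vsPost v vs hω

end Collision

section Configuration

instance : IsFiniteMeasure sphereMeasure :=
  inferInstanceAs (IsFiniteMeasure (volume : Measure ℝ³).toSphere)

/-- The measure `dω dv dv*` on collision configurations `(ω, (v, v*))`. The direction comes first so
that the collision is a skew product over it. -/
def configMeasure : Measure (S² × (ℝ³ × ℝ³)) :=
  sphereMeasure.prod (volume.prod volume)

/-- The collision map `(ω, (v, v*)) ↦ (ω, (v', v*'))`. -/
def collisionMap (p : S² × (ℝ³ × ℝ³)) : S² × (ℝ³ × ℝ³) :=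
  (p.1, collisionLinearMap p.1 p.2)

/-- The exchange of particles `(ω, (v, v*)) ↦ (ω, (v*, v))`. -/
def exchangeMap (p : S² × (ℝ³ × ℝ³)) : S² × (ℝ³ × ℝ³) :=
  (p.1, p.2.swap)

lemma continuous_collisionMap : Continuous collisionMap := by
  change Continuous fun p : S² × (ℝ³ × ℝ³) =>
    (p.1, (vPost p.2.1 p.2.2 p.1, vsPost p.2.1 p.2.2 p.1))
  unfold vPost vsPost
  fun_prop

lemma involutive_collisionMap : Function.Involutive collisionMap := fun p =>
  Prod.ext rfl (involutive_collisionLinearMap (norm_eq_of_mem_sphere p.1) p.2)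

lemma measurePreserving_collisionMap :
    MeasurePreserving collisionMap configMeasure configMeasure :=
  (MeasurePreserving.id sphereMeasure).skew_product (g := fun ω => collisionLinearMap (ω : ℝ³))
    (continuous_snd.comp continuous_collisionMap).measurable <| .of_forall fun ω =>
      (measurePreserving_of_involutive_linearMap _
        (involutive_collisionLinearMap (norm_eq_of_mem_sphere ω))).map_eq

lemma involutive_exchangeMap : Function.Involutive exchangeMap := fun p =>
  Prod.ext rfl p.2.swap_swap

lemma measurePreserving_exchangeMap :
    MeasurePreserving exchangeMap configMeasure configMeasure :=
  (MeasurePreserving.id sphereMeasure).prod Measure.measurePreserving_swap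

lemma integral_configMeasure {F : S² × (ℝ³ × ℝ³) → ℝ} (hF : Integrable F configMeasure) :
    ∫ p, F p ∂configMeasure = ∫ v, ∫ vs, ∫ ω, F (ω, (v, vs)) ∂sphereMeasure :=
  (integral_prod_symm F hF).trans (integral_prod _ hF.integral_prod_right)

end Configuration

section WeakForm

/-- The loss integrand `f(v) f(v*) |(v - v*)·ω|` of the collision integral. -/
def lossKernel (f : ℝ³ → ℝ) (p : S² × (ℝ³ × ℝ³)) : ℝ :=
  f p.2.1 * f p.2.2 * |⟪p.2.1 - p.2.2, (p.1 : ℝ³)⟫|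

variable {f ψ : ℝ³ → ℝ}

lemma lossKernel_exchangeMap (p : S² × (ℝ³ × ℝ³)) :
    lossKernel f (exchangeMap p) = lossKernel f p := by
  simp only [lossKernel, exchangeMap, Prod.fst_swap, Prod.snd_swap]
  rw [← neg_sub p.2.1 p.2.2, inner_neg_left, abs_neg, mul_comm (f p.2.2)]

lemma lossKernel_collisionMap (p : S² × (ℝ³ × ℝ³)) :
    lossKernel f (collisionMap p) =
      f (vPost p.2.1 p.2.2 p.1) * f (vsPost p.2.1 p.2.2 p.1) * |⟪p.2.1 - p.2.2, (p.1 : ℝ³)⟫| := by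
  rw [← abs_neg, ← inner_vPost_sub_vsPost _ _ (norm_eq_of_mem_sphere p.1)]
  rfl

lemma collisionIntegral_eq_integral_lossKernel (v : ℝ³) :
    collisionIntegral f v = ∫ vs, ∫ ω, (lossKernel f (collisionMap (ω, (v, vs))) -
      lossKernel f (ω, (v, vs))) ∂sphereMeasure := by
  simp only [collisionIntegral, lossKernel_collisionMap, sub_mul]
  rfl

lemma integral_collisionIntegral_mul_eq_integral_configMeasure
    (h : Integrable (fun p => lossKernel f p * ψ p.2.1) configMeasure)
    (h' : Integrable (fun p => lossKernel f p * ψ (collisionMap p).2.1) configMeasure) :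
    ∫ v, collisionIntegral f v * ψ v =
      ∫ p, (lossKernel f (collisionMap p) - lossKernel f p) * ψ p.2.1 ∂configMeasure := by
  have hgain : Integrable (fun p => lossKernel f (collisionMap p) * ψ p.2.1) configMeasure :=
    integrable_comp_mul_of_involutive (φ := fun p => ψ p.2.1) measurePreserving_collisionMap
      involutive_collisionMap h'
  have hdiff : Integrable (fun p => (lossKernel f (collisionMap p) - lossKernel f p) * ψ p.2.1)
      configMeasure :=
    (hgain.sub h).congr (.of_forall fun p => (sub_mul _ _ _).symm)
  rw [integral_configMeasure hdiff]
  simp only [collisionIntegral_eq_integral_lossKernel, integral_mul_const]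

theorem integral_collisionIntegral_mul_eq_half_integral
    (h : Integrable (fun p => lossKernel f p * ψ p.2.1) configMeasure)
    (h' : Integrable (fun p => lossKernel f p * ψ (collisionMap p).2.1) configMeasure) :
    ∫ v, collisionIntegral f v * ψ v =
      1 / 2 * ∫ p, lossKernel f p *
        (ψ (vPost p.2.1 p.2.2 p.1) + ψ (vsPost p.2.1 p.2.2 p.1) - ψ p.2.1 - ψ p.2.2)
        ∂configMeasure := by
  have hint : Integrable (fun p => lossKernel f p * (ψ (collisionMap p).2.1 - ψ p.2.1))
      configMeasure :=
    (h'.sub h).congr (.of_forall fun p => (mul_sub _ _ _).symm)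
  calc ∫ v, collisionIntegral f v * ψ v
      = ∫ p, (lossKernel f (collisionMap p) - lossKernel f p) * ψ p.2.1 ∂configMeasure :=
        integral_collisionIntegral_mul_eq_integral_configMeasure h h'
    _ = ∫ p, lossKernel f p * (ψ (collisionMap p).2.1 - ψ p.2.1) ∂configMeasure :=
        integral_comp_sub_mul_of_involutive (φ := fun p => ψ p.2.1)
          measurePreserving_collisionMap involutive_collisionMap h h'
    _ = _ := by
        rw [integral_eq_half_integral_add_comp measurePreserving_exchangeMap
          involutive_exchangeMap hint]
        congr! 3 with p
        have hswap : (collisionMap (exchangeMap p)).2.1 = vsPost p.2.1 p.2.2 p.1 :=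
          vPost_swap p.2.1 p.2.2 p.1
        rw [lossKernel_exchangeMap, hswap]
        simp only [collisionMap, collisionLinearMap, exchangeMap, LinearMap.coe_mk, AddHom.coe_mk,
          Prod.fst_swap]
        ring

end WeakForm

section Moments

variable {f : ℝ³ → ℝ} {k : ℕ} {K : ℝ}

lemma integrable_lossKernel_mul (hf : Integrable fun v => (1 + ‖v‖) ^ (k + 1) * f v)
    {Φ : S² × (ℝ³ × ℝ³) → ℝ} (hΦ : AEStronglyMeasurable Φ configMeasure)
    (hK : ∀ p, |Φ p| ≤ K * ((1 + ‖p.2.1‖) * (1 + ‖p.2.2‖)) ^ k) :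
    Integrable (fun p => lossKernel f p * Φ p) configMeasure := by
  -- Splitting off the weighted densities leaves the bounded factor `R`.
  let A : S² × (ℝ³ × ℝ³) → ℝ := fun p => (1 + ‖p.2.1‖) * (1 + ‖p.2.2‖)
  let R : S² × (ℝ³ × ℝ³) → ℝ := fun p =>
    (A p ^ (k + 1))⁻¹ * |⟪p.2.1 - p.2.2, (p.1 : ℝ³)⟫| * Φ p
  have hA : ∀ p, 0 < A p := fun p => by positivity
  have hR : AEStronglyMeasurable R configMeasure := by
    refine Continuous.aestronglyMeasurable ?_ |>.mul hΦ
    exact ((by fun_prop : Continuous fun p => A p ^ (k + 1)).inv₀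
      fun p => (pow_pos (hA p) _).ne').mul (by fun_prop)
  have hR_le : ∀ p, ‖R p‖ ≤ K := fun p => by
    have hcross : |⟪p.2.1 - p.2.2, (p.1 : ℝ³)⟫| ≤ A p :=
      abs_inner_sub_le_one_add_norm_mul _ _ (norm_eq_of_mem_sphere p.1)
    have hApow := pow_pos (hA p) (k + 1)
    calc ‖R p‖ = (A p ^ (k + 1))⁻¹ * (|⟪p.2.1 - p.2.2, (p.1 : ℝ³)⟫| * |Φ p|) := by
          rw [Real.norm_eq_abs, abs_mul, abs_mul, abs_abs, abs_of_pos (inv_pos.2 hApow), mul_assoc]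
      _ ≤ (A p ^ (k + 1))⁻¹ * (A p * (K * A p ^ k)) := by
          gcongr
          exact hK p
      _ = K := by rw [inv_mul_eq_iff_eq_mul₀ hApow.ne']; ring
  have hff : Integrable (fun p : S² × (ℝ³ × ℝ³) => ((1 + ‖p.2.1‖) ^ (k + 1) * f p.2.1) *
      ((1 + ‖p.2.2‖) ^ (k + 1) * f p.2.2)) configMeasure :=
    (hf.mul_prod hf).comp_snd sphereMeasure
  refine (hff.mul_bdd hR (.of_forall hR_le)).congr (.of_forall fun p => ?_)
  simp only [R, A, lossKernel, mul_pow]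
  field_simp

theorem IsCollisionInvariant.integral_collisionIntegral_mul_eq_zero {ψ : ℝ³ → ℝ}
    (hinv : IsCollisionInvariant ψ) (hψ : Measurable ψ) (hK : ∀ v, |ψ v| ≤ K * (1 + ‖v‖) ^ k)
    (hf : Integrable fun v => (1 + ‖v‖) ^ (k + 1) * f v) :
    ∫ v, collisionIntegral f v * ψ v = 0 := by
  have hK0 : 0 ≤ K := by simpa using (abs_nonneg _).trans (hK 0)
  have hpre : Integrable (fun p => lossKernel f p * ψ p.2.1) configMeasure := by
    have hmeas : Measurable fun p : S² × (ℝ³ × ℝ³) => ψ p.2.1 := by fun_prop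
    refine integrable_lossKernel_mul (K := K) hf hmeas.aestronglyMeasurable
      fun p => (hK _).trans ?_
    gcongr
    exact le_mul_of_one_le_right (by positivity) (by simp)
  have hpost : Integrable (fun p => lossKernel f p * ψ (collisionMap p).2.1) configMeasure := by
    have hmeas : Measurable fun p => ψ (collisionMap p).2.1 :=
      hψ.comp (measurable_fst.comp (measurable_snd.comp continuous_collisionMap.measurable))
    refine integrable_lossKernel_mul (K := K) hf hmeas.aestronglyMeasurable
      fun p => (hK _).trans ?_
    gcongr
    exact one_add_norm_vPost_le _ _ (norm_eq_of_mem_sphere p.1)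
  have hzero : ∀ p : S² × (ℝ³ × ℝ³),
      ψ (vPost p.2.1 p.2.2 p.1) + ψ (vsPost p.2.1 p.2.2 p.1) - ψ p.2.1 - ψ p.2.2 = 0 := fun p => by
    linear_combination hinv p.2.1 p.2.2 p.1 (norm_eq_of_mem_sphere p.1)
  simp only [integral_collisionIntegral_mul_eq_half_integral hpre hpost, hzero, mul_zero,
    integral_zero]

lemma RapidlyDecaying.integrable_one_add_norm_pow_mul (hdec : RapidlyDecaying f)
    (hf_nonneg : ∀ v, 0 ≤ f v) (hf : AEStronglyMeasurable f) (k : ℕ) :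
    Integrable fun v => (1 + ‖v‖) ^ k * f v := by
  -- The power `4 > dim ℝ³` makes the remaining decay integrable.
  obtain ⟨C, hC⟩ := hdec (k + 4)
  have hdom : Integrable fun v : ℝ³ => C * (1 + ‖v‖) ^ (-(4 : ℝ)) :=
    (integrable_one_add_norm (by rw [finrank_euclideanSpace_fin]; norm_num)).const_mul C
  refine hdom.mono' ((by fun_prop : Continuous fun v : ℝ³ => (1 + ‖v‖) ^ k).aestronglyMeasurable.mul
    hf) (.of_forall fun v => ?_)
  have hpow : 0 < (1 + ‖v‖) ^ 4 := by positivity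
  have hrpow : (1 + ‖v‖) ^ (-(4 : ℝ)) = ((1 + ‖v‖) ^ 4)⁻¹ := by
    rw [Real.rpow_neg (by positivity)]; norm_cast
  rw [Real.norm_of_nonneg (mul_nonneg (by positivity) (hf_nonneg v)), hrpow, ← div_eq_mul_inv,
    le_div_iff₀ hpow]
  calc (1 + ‖v‖) ^ k * f v * (1 + ‖v‖) ^ 4 = (1 + ‖v‖) ^ (k + 4) * f v := by ring
    _ ≤ C := hC v

end Moments

theorem collisionIntegral_conservation_laws_general (f : ℝ³ → ℝ)
    (hf : Integrable fun v => (1 + ‖v‖) ^ 3 * f v) :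
    (∀ (a c : ℝ) (b : ℝ³),
      (∫ v, collisionIntegral f v * (a + ⟪b, v⟫ + c * ‖v‖ ^ 2)) = 0) ∧
    (∫ v, collisionIntegral f v) = 0 ∧
    (∀ k : Fin 3, (∫ v, collisionIntegral f v * v k) = 0) ∧
    (∫ v, collisionIntegral f v * ‖v‖ ^ 2) = 0 := by
  have hquad (a c : ℝ) (b : ℝ³) :
      ∫ v, collisionIntegral f v * (a + ⟪b, v⟫ + c * ‖v‖ ^ 2) = 0 :=
    (isCollisionInvariant_quadratic a c b).integral_collisionIntegral_mul_eq_zero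
      (by fun_prop) (abs_quadratic_le a c b) hf
  refine ⟨hquad, ?mass, fun k => ?momentum, ?energy⟩
  case mass => simpa using hquad 1 0 0
  case momentum =>
    simpa [EuclideanSpace.inner_single_left] using hquad 0 0 (EuclideanSpace.single k 1)
  case energy => simpa using hquad 0 1 0

/-- **Conservation of mass, momentum and energy by collisions.** For `f` continuous,
nonnegative and rapidly decaying, and every collision invariant `ψ(v) = a + b·v + c|v|²`,
`∫ C(f) ψ dv = 0`; in particular `∫ C(f) dv = 0`, `∫ C(f) v_k dv = 0` (`k = 1,2,3`) and
`∫ C(f) |v|² dv = 0`. -/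
theorem collisionIntegral_conservation_laws (f : EuclideanSpace ℝ (Fin 3) → ℝ)
    (hf_cont : Continuous f) (hf_nonneg : ∀ v, 0 ≤ f v) (hf_dec : RapidlyDecaying f) :
    (∀ (a c : ℝ) (b : EuclideanSpace ℝ (Fin 3)),
      (∫ v, collisionIntegral f v * (a + ⟪b, v⟫ + c * ‖v‖ ^ 2)) = 0) ∧
    (∫ v, collisionIntegral f v) = 0 ∧
    (∀ k : Fin 3, (∫ v, collisionIntegral f v * v k) = 0) ∧
    (∫ v, collisionIntegral f v * ‖v‖ ^ 2) = 0 := by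
  exact collisionIntegral_conservation_laws_general f
    (hf_dec.integrable_one_add_norm_pow_mul hf_nonneg hf_cont.aestronglyMeasurable 3)

end
end

section
/- (Characterization of collisional equilibria.) Let f : ℝ³ → ℝ be continuous, strictly positive and rapidly decaying, with ln f of polynomial growth. If f(v')f(v*') = f(v)f(v*) for all v, v* ∈ ℝ³ and all unit vectors ω ∈ ℝ³ (where v', v*' are the post-collision velocities), then f is a Maxwellian: there exist ρ > 0, θ > 0 and u ∈ ℝ³ such that f(v) = ρ(2πθ)^{−3/2} exp(−|v−u|²/(2θ)) for every v ∈ ℝ³. -/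
/-!
Put `g = log f - log f 0`. Colliding `x + y` with `0` along the direction of `y` exchanges the
orthogonal components, so `g (x + y) = g x + g y` whenever `x ⊥ y`. In dimension at least two the
odd and the even part of such a `g` are rigid.

If `g` is even, then `‖x‖ = ‖y‖` gives `x + y ⊥ x - y`, which forces `g x = g y`; by Pythagoras `g`
is an additive function of `‖x‖²`. If `g` is odd and `a b ≥ 0`, pick `y ⊥ x` with
`‖y‖² = a b ‖x‖²`: then `a x + y ⊥ b x - y`, and the contributions of `y` cancel in `g (a x + b x)`,
so `g` is additive on lines, hence additive. With continuity, `log f v = a + c ‖v‖² + ⟪b, v⟫`. Decay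
of `f` at infinity forces `c < 0`, and completing the square exhibits the Maxwellian.
-/

open scoped RealInnerProductSpace

noncomputable section

open Bornology Filter Module Topology
open scoped NNReal

lemma denseRange_nnratCast_nnreal : DenseRange ((↑) : ℚ≥0 → ℝ≥0) := by
  refine dense_of_exists_between fun a b hab => ?_
  obtain ⟨q, hq, haq, hqb⟩ := (NNReal.lt_iff_exists_rat_btwn a b).1 hab
  lift q to ℚ≥0 using hq
  have hcast : Real.toNNReal ((q : ℚ) : ℝ) = q := by
    rw [Rat.cast_nnratCast, ← map_nnratCast NNReal.toRealHom, NNReal.coe_toRealHom,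
      Real.toNNReal_coe]
  exact ⟨q, Set.mem_range_self q, hcast ▸ haq, hcast ▸ hqb⟩

lemma map_nnreal_smul {M N : Type*} [AddCommMonoid M] [Module ℝ≥0 M] [TopologicalSpace M]
    [ContinuousSMul ℝ≥0 M] [AddCommMonoid N] [Module ℝ≥0 N] [TopologicalSpace N]
    [ContinuousSMul ℝ≥0 N] [T2Space N] (φ : M →+ N) (hφ : Continuous φ) (c : ℝ≥0) (x : M) :
    φ (c • x) = c • φ x := by
  have h : (fun c : ℝ≥0 => φ (c • x)) = fun c => c • φ x :=
    denseRange_nnratCast_nnreal.equalizer (by fun_prop) (by fun_prop)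
      (funext fun q => map_nnratCast_smul φ ℝ≥0 ℝ≥0 q x)
  exact congrFun h c

section InnerProductSpace

variable {E : Type*} [NormedAddCommGroup E] [InnerProductSpace ℝ E]

lemma exists_norm_eq_inner_eq_zero (hE : 1 < Module.rank ℝ E) (x : E) {r : ℝ} (hr : 0 ≤ r) :
    ∃ y : E, ‖y‖ = r ∧ ⟪x, y⟫ = 0 := by
  have hspan : (ℝ ∙ x)ᗮ ≠ ⊥ := by
    rw [Ne, Submodule.orthogonal_eq_bot_iff]
    intro htop
    have hrank := rank_span_le (R := ℝ) {x}
    rw [htop, rank_top, Cardinal.mk_singleton] at hrank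
    exact hE.not_ge hrank
  obtain ⟨w, hw, hw0⟩ := Submodule.exists_mem_ne_zero_of_ne_bot hspan
  rw [Submodule.mem_orthogonal_singleton_iff_inner_right] at hw
  refine ⟨(r / ‖w‖) • w, ?_, by rw [inner_smul_right, hw, mul_zero]⟩
  rw [norm_smul, Real.norm_of_nonneg (by positivity), div_mul_cancel₀ _ (norm_ne_zero_iff.2 hw0)]

/-- Cauchy's functional equation restricted to orthogonal pairs of vectors. -/
def OrthogonallyAdditive {F : Type*} [Add F] (g : E → F) : Prop :=
  ∀ ⦃x y : E⦄, ⟪x, y⟫ = 0 → g (x + y) = g x + g y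

namespace OrthogonallyAdditive

section Add

variable {F : Type*} [Add F] {g : E → F}

lemma comp_neg (hg : OrthogonallyAdditive g) : OrthogonallyAdditive fun x => g (-x) :=
  fun x y hxy => by simp only [neg_add, hg ((inner_neg_neg x y).trans hxy)]

lemma eq_of_even_of_norm_eq (hg : OrthogonallyAdditive g) (heven : g.Even) {x y : E}
    (hxy : ‖x‖ = ‖y‖) : g x = g y := by
  set p : E := (1 / 2 : ℝ) • (x + y)
  set q : E := (1 / 2 : ℝ) • (x - y)
  have hpq : ⟪p, q⟫ = 0 := by
    rw [real_inner_smul_left, real_inner_smul_right, (real_inner_add_sub_eq_zero_iff x y).2 hxy,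
      mul_zero, mul_zero]
  calc g x = g (p + q) := by congr 1; module
    _ = g p + g (-q) := by rw [hg hpq, heven]
    _ = g (p + -q) := (hg (by rw [inner_neg_right, hpq, neg_zero])).symm
    _ = g y := by congr 1; module

lemma map_sqrt_add_smul_of_even (hE : 1 < Module.rank ℝ E) (hg : OrthogonallyAdditive g)
    (heven : g.Even) (s t : ℝ≥0) (u : E) :
    g (√(s + t : ℝ) • u) = g (√(s : ℝ) • u) + g (√(t : ℝ) • u) := by
  obtain ⟨w, hw, huw⟩ := exists_norm_eq_inner_eq_zero hE u (norm_nonneg u)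
  have horth : ⟪√(s : ℝ) • u, √(t : ℝ) • w⟫ = 0 := by
    rw [real_inner_smul_left, real_inner_smul_right, huw, mul_zero, mul_zero]
  have hnorm : ‖√(s + t : ℝ) • u‖ = ‖√(s : ℝ) • u + √(t : ℝ) • w‖ := by
    rw [← sq_eq_sq₀ (norm_nonneg _) (norm_nonneg _), norm_add_sq_real, horth]
    simp only [norm_smul, mul_pow, hw, Real.norm_eq_abs, sq_abs, Real.sq_sqrt s.coe_nonneg,
      Real.sq_sqrt t.coe_nonneg, Real.sq_sqrt (add_nonneg s.coe_nonneg t.coe_nonneg)]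
    ring
  rw [hg.eq_of_even_of_norm_eq heven hnorm, hg horth]
  congr 1
  exact hg.eq_of_even_of_norm_eq heven (by rw [norm_smul, norm_smul, hw])

end Add

section AddCommGroup

variable {F : Type*} [AddCommGroup F] {g g' : E → F}

lemma map_zero (hg : OrthogonallyAdditive g) : g 0 = 0 := by
  simpa using hg (inner_zero_left (0 : E))

lemma add (hg : OrthogonallyAdditive g) (hg' : OrthogonallyAdditive g') :
    OrthogonallyAdditive (g + g') := fun x y hxy => by
  simp only [Pi.add_apply, hg hxy, hg' hxy]
  abel

lemma sub (hg : OrthogonallyAdditive g) (hg' : OrthogonallyAdditive g') :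
    OrthogonallyAdditive (g - g') := fun x y hxy => by
  simp only [Pi.sub_apply, hg hxy, hg' hxy]
  abel

lemma map_add_smul_of_odd_of_mul_nonneg (hE : 1 < Module.rank ℝ E) (hg : OrthogonallyAdditive g)
    (hodd : g.Odd) {a b : ℝ} (hab : 0 ≤ a * b) (x : E) :
    g ((a + b) • x) = g (a • x) + g (b • x) := by
  obtain ⟨y, hy, hxy⟩ := exists_norm_eq_inner_eq_zero hE x (r := √(a * b) * ‖x‖) (by positivity)
  have hyx : ⟪y, x⟫ = 0 := by rwa [real_inner_comm]
  have horth : ⟪a • x + y, b • x + -y⟫ = 0 := by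
    simp only [inner_add_left, inner_add_right, inner_smul_left, inner_smul_right, inner_neg_right,
      hxy, hyx, real_inner_self_eq_norm_sq, hy, mul_pow, Real.sq_sqrt hab, conj_trivial]
    ring
  calc g ((a + b) • x) = g (a • x + y + (b • x + -y)) := by congr 1; module
    _ = g (a • x) + g y + (g (b • x) + g (-y)) := by
      rw [hg horth, hg (by rw [real_inner_smul_left, hxy, mul_zero]),
        hg (by rw [inner_neg_right, real_inner_smul_left, hxy, mul_zero, neg_zero])]
    _ = g (a • x) + g (b • x) := by rw [hodd y]; abel

lemma map_add_smul_of_odd (hE : 1 < Module.rank ℝ E) (hg : OrthogonallyAdditive g)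
    (hodd : g.Odd) (a b : ℝ) (x : E) : g ((a + b) • x) = g (a • x) + g (b • x) := by
  have hsum {s t : ℝ} (hst : 0 ≤ s * t) : g ((s + t) • x) = g (s • x) + g (t • x) :=
    hg.map_add_smul_of_odd_of_mul_nonneg hE hodd hst x
  have hneg (t : ℝ) : g (-t • x) = -g (t • x) := by rw [neg_smul, hodd]
  rcases le_or_gt 0 (a * b) with hab | hab
  · exact hsum hab
  -- `a` and `b` have opposite signs; move the one of smaller modulus to the other side.
  · rcases le_total 0 ((a + b) * -b) with hb | hb
    · have hsplit := hsum hb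
      rw [add_neg_cancel_right, hneg] at hsplit
      rw [hsplit, neg_add_cancel_right]
    · have ha : 0 ≤ (a + b) * -a := by nlinarith
      have hsplit := hsum ha
      rw [add_neg_cancel_comm, hneg] at hsplit
      rw [hsplit]
      abel

lemma map_add_of_odd (hE : 1 < Module.rank ℝ E) (hg : OrthogonallyAdditive g) (hodd : g.Odd)
    (x y : E) : g (x + y) = g x + g y := by
  obtain ⟨p, hp, z, hz, rfl⟩ := (ℝ ∙ x).exists_add_mem_mem_orthogonal y
  obtain ⟨t, rfl⟩ := Submodule.mem_span_singleton.1 hp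
  rw [Submodule.mem_orthogonal_singleton_iff_inner_right] at hz
  have hsmul (s : ℝ) : g (s • x + z) = g (s • x) + g z :=
    hg (by rw [real_inner_smul_left, hz, mul_zero])
  calc g (x + (t • x + z)) = g ((1 + t) • x + z) := by congr 1; module
    _ = g x + g (t • x) + g z := by
      rw [hsmul, hg.map_add_smul_of_odd hE hodd, one_smul]
    _ = g x + g (t • x + z) := by rw [hsmul, add_assoc]

end AddCommGroup

section Continuous

variable {F : Type*} [AddCommGroup F] [Module ℝ F] [TopologicalSpace F] [ContinuousSMul ℝ F]
  [T2Space F] {g : E → F}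

lemma exists_eq_norm_sq_smul_of_even (hE : 1 < Module.rank ℝ E) (hg : OrthogonallyAdditive g)
    (heven : g.Even) (hcont : Continuous g) : ∃ c : F, ∀ x, g x = ‖x‖ ^ 2 • c := by
  obtain ⟨u, hu, -⟩ := exists_norm_eq_inner_eq_zero hE 0 zero_le_one
  let φ : ℝ≥0 →+ F :=
    { toFun t := g (√(t : ℝ) • u)
      map_zero' := by simp [hg.map_zero]
      map_add' s t := by exact_mod_cast hg.map_sqrt_add_smul_of_even hE heven s t u }
  have hφ : Continuous φ := by
    change Continuous fun t : ℝ≥0 => g (√(t : ℝ) • u)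
    fun_prop
  refine ⟨φ 1, fun x => ?_⟩
  calc g x = g (√((‖x‖₊ ^ 2 : ℝ≥0) : ℝ) • u) :=
        hg.eq_of_even_of_norm_eq heven (by simp [norm_smul, hu])
    _ = φ (‖x‖₊ ^ 2 • 1) := by rw [smul_eq_mul, mul_one]; rfl
    _ = ‖x‖ ^ 2 • φ 1 := map_nnreal_smul φ hφ _ _

lemma exists_eq_norm_sq_smul_add [IsTopologicalAddGroup F] (hE : 1 < Module.rank ℝ E)
    (hg : OrthogonallyAdditive g) (hcont : Continuous g) :
    ∃ (c : F) (L : E →L[ℝ] F), ∀ x, g x = ‖x‖ ^ 2 • c + L x := by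
  obtain ⟨c, hc⟩ := (hg.add hg.comp_neg).exists_eq_norm_sq_smul_of_even hE
    (fun x => by simp [add_comm]) (by fun_prop)
  let A : E →+ F := AddMonoidHom.mk' (g - fun x => g (-x))
    ((hg.sub hg.comp_neg).map_add_of_odd hE fun x => by simp)
  have hA : Continuous A := hcont.sub (hcont.comp continuous_neg)
  refine ⟨(1 / 2 : ℝ) • c, (1 / 2 : ℝ) • A.toRealLinearMap hA, fun x => ?_⟩
  have hodd : A.toRealLinearMap hA x = g x - g (-x) := rfl
  rw [smul_comm, ← hc x, smul_apply, hodd, Pi.add_apply]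
  module

end Continuous

end OrthogonallyAdditive

/-- Detailed balance for elastic collisions in the velocity space `E`: the product `f v * f w` is
unchanged when `v` and `w` exchange their components along a unit vector `ω`. -/
def IsCollisionalEquilibrium (f : E → ℝ) : Prop :=
  ∀ v w ω : E, ‖ω‖ = 1 → f (v - ⟪v - w, ω⟫ • ω) * f (w + ⟪v - w, ω⟫ • ω) = f v * f w

/-- The Maxwellian on `E` with density `ρ`, temperature `θ` and bulk velocity `u`, where the
dimension `3` of the physical velocity space is replaced by that of `E`. -/
def maxwellian (ρ θ : ℝ) (u v : E) : ℝ :=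
  ρ * (2 * Real.pi * θ) ^ (-(finrank ℝ E : ℝ) / 2) * Real.exp (-‖v - u‖ ^ 2 / (2 * θ))

namespace IsCollisionalEquilibrium

variable {f : E → ℝ}

lemma mul_eq_mul_zero_of_inner_eq_zero (hf : IsCollisionalEquilibrium f) {x y : E}
    (hxy : ⟪x, y⟫ = 0) : f x * f y = f (x + y) * f 0 := by
  rcases eq_or_ne y 0 with rfl | hy
  · rw [add_zero]
  have hy' : ‖y‖ ≠ 0 := norm_ne_zero_iff.2 hy
  have hexchange : ⟪x + y - 0, ‖y‖⁻¹ • y⟫ • ‖y‖⁻¹ • y = y := by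
    rw [sub_zero, real_inner_smul_right, inner_add_left, hxy, zero_add, real_inner_self_eq_norm_sq,
      smul_smul, show ‖y‖⁻¹ * ‖y‖ ^ 2 * ‖y‖⁻¹ = 1 by field_simp, one_smul]
  have hcollision := hf (x + y) 0 (‖y‖⁻¹ • y) (norm_smul_inv_norm hy)
  rwa [hexchange, add_sub_cancel_right, zero_add] at hcollision

lemma orthogonallyAdditive_log_sub (hf : IsCollisionalEquilibrium f) (hpos : ∀ v, 0 < f v) :
    OrthogonallyAdditive fun v => Real.log (f v) - Real.log (f 0) := fun x y hxy => by
  have hlog := congrArg Real.log (hf.mul_eq_mul_zero_of_inner_eq_zero hxy)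
  rw [Real.log_mul (hpos _).ne' (hpos _).ne', Real.log_mul (hpos _).ne' (hpos _).ne'] at hlog
  linarith

lemma exists_log_eq_quadratic [CompleteSpace E] (hE : 1 < Module.rank ℝ E)
    (hf : IsCollisionalEquilibrium f) (hcont : Continuous f) (hpos : ∀ v, 0 < f v) :
    ∃ (a c : ℝ) (b : E), ∀ v, Real.log (f v) = a + (c * ‖v‖ ^ 2 + ⟪b, v⟫) := by
  obtain ⟨c, L, hcL⟩ := (hf.orthogonallyAdditive_log_sub hpos).exists_eq_norm_sq_smul_add hE
    ((hcont.log fun v => (hpos v).ne').sub continuous_const)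
  refine ⟨Real.log (f 0), c, (InnerProductSpace.toDual ℝ E).symm L, fun v => ?_⟩
  rw [InnerProductSpace.toDual_symm_apply, mul_comm, ← smul_eq_mul, ← hcL, add_sub_cancel]

end IsCollisionalEquilibrium

lemma neg_of_tendsto_quadratic_atBot [Nontrivial E] {c : ℝ} {b : E}
    (h : Tendsto (fun v : E => c * ‖v‖ ^ 2 + ⟪b, v⟫) (cobounded E) atBot) : c < 0 := by
  obtain ⟨v, hv, hv'⟩ := ((h.eventually_lt_atBot 0).and
    ((h.comp tendsto_neg_cobounded).eventually_lt_atBot 0)).exists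
  simp only [Function.comp_apply, norm_neg, inner_neg_right] at hv'
  have hsum : c * ‖v‖ ^ 2 < 0 := by linarith
  exact neg_of_mul_neg_left hsum (sq_nonneg ‖v‖)

lemma neg_norm_sub_smul_sq_div {θ : ℝ} (hθ : θ ≠ 0) (b v : E) :
    -‖v - θ • b‖ ^ 2 / (2 * θ) = -‖v‖ ^ 2 / (2 * θ) + ⟪b, v⟫ - θ * ‖b‖ ^ 2 / 2 := by
  rw [norm_sub_sq_real, real_inner_smul_right, real_inner_comm, norm_smul, mul_pow,
    Real.norm_eq_abs, sq_abs]
  field_simp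
  ring

lemma exists_exp_quadratic_eq_maxwellian (a : ℝ) {c : ℝ} (hc : c < 0) (b : E) :
    ∃ (ρ θ : ℝ) (u : E), 0 < ρ ∧ 0 < θ ∧
      ∀ v, Real.exp (a + (c * ‖v‖ ^ 2 + ⟪b, v⟫)) = maxwellian ρ θ u v := by
  obtain ⟨θ, hθ, rfl⟩ : ∃ θ : ℝ, 0 < θ ∧ c = -1 / (2 * θ) :=
    ⟨-1 / (2 * c), div_pos_of_neg_of_neg (by norm_num) (by linarith), by field_simp [hc.ne]⟩
  have hZ : 0 < (2 * Real.pi * θ) ^ (-(finrank ℝ E : ℝ) / 2) := by positivity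
  refine ⟨Real.exp (a + θ * ‖b‖ ^ 2 / 2) / (2 * Real.pi * θ) ^ (-(finrank ℝ E : ℝ) / 2), θ, θ • b,
    by positivity, hθ, fun v => ?_⟩
  rw [maxwellian, div_mul_cancel₀ _ hZ.ne', ← Real.exp_add, neg_norm_sub_smul_sq_div hθ.ne']
  congr 1
  ring

theorem collisional_equilibrium_is_maxwellian_general (hE : 1 < finrank ℝ E) {f : E → ℝ}
    (hcont : Continuous f) (hpos : ∀ v, 0 < f v) (hdecay : Tendsto f (cobounded E) (𝓝 0))
    (hf : IsCollisionalEquilibrium f) :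
    ∃ (ρ θ : ℝ) (u : E), 0 < ρ ∧ 0 < θ ∧ ∀ v, f v = maxwellian ρ θ u v := by
  have : FiniteDimensional ℝ E := .of_finrank_pos (by lia)
  have : Nontrivial E := nontrivial_of_finrank_pos (R := ℝ) (by lia)
  obtain ⟨a, c, b, hlog⟩ :=
    hf.exists_log_eq_quadratic (one_lt_rank_of_one_lt_finrank hE) hcont hpos
  have hexp (v : E) : f v = Real.exp (a + (c * ‖v‖ ^ 2 + ⟪b, v⟫)) := by
    rw [← hlog, Real.exp_log (hpos v)]
  have hquad : Tendsto (fun v => c * ‖v‖ ^ 2 + ⟪b, v⟫) (cobounded E) atBot := by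
    rw [funext hexp, Real.tendsto_exp_comp_nhds_zero] at hdecay
    simpa using tendsto_atBot_add_const_left _ (-a) hdecay
  simpa only [hexp] using
    exists_exp_quadratic_eq_maxwellian a (neg_of_tendsto_quadratic_atBot hquad) b

end InnerProductSpace

lemma RapidlyDecaying.tendsto_cobounded {f : EuclideanSpace ℝ (Fin 3) → ℝ}
    (hf : RapidlyDecaying f) (hnonneg : ∀ v, 0 ≤ f v) : Tendsto f (cobounded _) (𝓝 0) := by
  obtain ⟨C, hC⟩ := hf 1
  refine squeeze_zero hnonneg (g := fun v => C / (1 + ‖v‖)) (fun v => ?_) ?_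
  · rw [le_div_iff₀' (by positivity), ← pow_one (1 + ‖v‖)]
    exact hC v
  · exact (tendsto_atTop_add_const_left _ 1 tendsto_norm_cobounded_atTop).const_div_atTop C

/-- **Characterization of collisional equilibria.** If `f` is continuous, strictly positive,
rapidly decaying, with `ln f` of polynomial growth, and `f(v')f(v*') = f(v)f(v*)` for all
`v, v* ∈ ℝ³` and all unit vectors `ω`, then `f` is a Maxwellian:
`f(v) = ρ (2πθ)^{−3/2} exp(−|v−u|²/(2θ))` for some `ρ, θ > 0` and `u ∈ ℝ³`. -/
theorem collisional_equilibrium_is_maxwellian (f : EuclideanSpace ℝ (Fin 3) → ℝ)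
    (hf_cont : Continuous f) (hf_pos : ∀ v, 0 < f v)
    (hf_dec : RapidlyDecaying f) (hf_log : LogPolyGrowth f)
    (h : ∀ v vs ω : EuclideanSpace ℝ (Fin 3), ‖ω‖ = 1 →
      f (vPost v vs ω) * f (vsPost v vs ω) = f v * f vs) :
    ∃ (ρ θ : ℝ) (u : EuclideanSpace ℝ (Fin 3)), 0 < ρ ∧ 0 < θ ∧
      ∀ v, f v = ρ * (2 * Real.pi * θ) ^ (-(3 : ℝ) / 2) *
        Real.exp (-‖v - u‖ ^ 2 / (2 * θ)) := by
  simpa only [maxwellian, finrank_euclideanSpace_fin, Nat.cast_ofNat] using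
    collisional_equilibrium_is_maxwellian_general (by simp) hf_cont hf_pos
      (hf_dec.tendsto_cobounded fun v => (hf_pos v).le) h

end
end
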